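/- For every constant ε > 0 there exist a sequence p̄ = (p(1), p(2), …) with 0 ≤ p(i) < 1 for all i, and a first-order sentence ψ of the language L, such that −log(∏_{i=1}^n (1 − p(i))) / log n < ε for all sufficiently large n, yet liminf_{n→∞} Prob(n,p̄;ψ) = 0 while limsup_{n→∞} Prob(n,p̄;ψ) = 1. -/

import Mathlib

open FirstOrder Filter

namespace RandomGraph

/-- The set of potential edges of a graph on `Fin n` (pairs `(v,w)` with `v < w`).
Vertex `v : Fin n` represents the number `v + 1` of the interval `[n] = {1, …, n}`. -/
abbrev EdgeIdx (n : ℕ) := {e : Fin n × Fin n // e.1 < e.2}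

/-- An outcome of the random graph on `[n]`: a choice of which potential edges are present. -/
abbrev Sample (n : ℕ) := EdgeIdx n → Bool

/-- Adjacency of two vertices (described by their values in `Fin n`) in the outcome `ω`. -/
def adjVal {n : ℕ} (ω : Sample n) (a b : ℕ) : Prop :=
  ∃ e : EdgeIdx n, ω e = true ∧
    ((e.1.1.val = a ∧ e.1.2.val = b) ∨ (e.1.1.val = b ∧ e.1.2.val = a))

/-- Adjacency of two vertices in the outcome `ω`. -/
def sampleAdj {n : ℕ} (ω : Sample n) (v w : Fin n) : Prop := adjVal ω v.val w.val

/-- The probability of the outcome `ω` in the model `G(n, p̄)`: each pair of distinct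
vertices at distance `d` is an edge with probability `p d`, independently.  (The value `p 0` is
never used, since distinct vertices are at distance at least 1.) -/
noncomputable def sampleWeight (p : ℕ → ℝ) {n : ℕ} (ω : Sample n) : ℝ :=
  ∏ e : EdgeIdx n,
    (if ω e then p (e.1.2.val - e.1.1.val) else 1 - p (e.1.2.val - e.1.1.val))

/-- The probability of the outcome `ω` in the circular model `C(n, p̄)`: vertices `v, w` are
adjacent with probability `p (min |v-w| (n - |v-w|))`, independently. -/
noncomputable def cWeight (p : ℕ → ℝ) {n : ℕ} (ω : Sample n) : ℝ :=
  ∏ e : EdgeIdx n,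
    (if ω e then p (min (e.1.2.val - e.1.1.val) (n - (e.1.2.val - e.1.1.val)))
      else 1 - p (min (e.1.2.val - e.1.1.val) (n - (e.1.2.val - e.1.1.val))))

open scoped Classical in
/-- The probability of the event `P` in the random graph `G(n, p̄)`. -/
noncomputable def Pr (p : ℕ → ℝ) (n : ℕ) (P : Sample n → Prop) : ℝ :=
  ∑ ω : Sample n, if P ω then sampleWeight p ω else 0

open scoped Classical in
/-- The probability of the event `P` in the circular random graph `C(n, p̄)`. -/
noncomputable def cPr (p : ℕ → ℝ) (n : ℕ) (P : Sample n → Prop) : ℝ :=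
  ∑ ω : Sample n, if P ω then cWeight p ω else 0

/-! ### The language `L` of graphs (also used as the language `L^c`) -/

/-- An outcome `ω` of the random graph, viewed as a structure of `FirstOrder.Language.graph`,
the language with a single binary adjacency predicate. -/
def graphStructure {n : ℕ} (ω : Sample n) : Language.graph.Structure (Fin n) where
  RelMap | .adj => fun x => sampleAdj ω (x 0) (x 1)

/-- Satisfaction of a sentence of the language `L` in the outcome `ω`. -/
def SatL {n : ℕ} (ω : Sample n) (ψ : Language.graph.Sentence) : Prop :=
  @Language.Sentence.Realize _ _ (graphStructure ω) ψ

/-- `Prob(n, p̄; ψ)` for a sentence `ψ` of the language `L`. -/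
noncomputable def ProbL (p : ℕ → ℝ) (n : ℕ) (ψ : Language.graph.Sentence) : ℝ :=
  Pr p n fun ω => SatL ω ψ

/-- The probability that `C(n, p̄)` satisfies a sentence `ψ` of the language `L^c = L`. -/
noncomputable def cProbL (p : ℕ → ℝ) (n : ℕ) (ψ : Language.graph.Sentence) : ℝ :=
  cPr p n fun ω => SatL ω ψ

/-! ### The language `L₊` -/

/-- The constants of the language `L₊`: the first element `1` and the last element `n`. -/
inductive plusFunc : ℕ → Type
  | one : plusFunc 0
  | last : plusFunc 0

/-- The relations of `L₊`: adjacency and successor. -/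
inductive plusRel : ℕ → Type
  | adj : plusRel 2
  | succ : plusRel 2

/-- The language `L₊` with adjacency, successor (`x = y + 1`), and constants `1` and `n`. -/
def Lplus : Language := ⟨plusFunc, plusRel⟩

/-- An outcome `ω` of the random graph on `[m+1]`, as an `L₊`-structure. -/
def plusStructure {m : ℕ} (ω : Sample (m + 1)) : Lplus.Structure (Fin (m + 1)) where
  funMap | .one => fun _ => 0 | .last => fun _ => Fin.last m
  RelMap
    | .adj => fun x => sampleAdj ω (x 0) (x 1)
    | .succ => fun x => (x 0).val = (x 1).val + 1

/-- `Prob(n, p̄; ψ)` for a sentence `ψ` of `L₊` (set to `0` in the irrelevant case `n = 0`,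
where the constants cannot be interpreted). -/
noncomputable def ProbPlus (p : ℕ → ℝ) : ℕ → Lplus.Sentence → ℝ
  | 0, _ => 0
  | (m + 1), ψ => Pr p (m + 1) fun ω => @Language.Sentence.Realize _ _ (plusStructure ω) ψ

/-! ### The language `L≤` -/

/-- The relations of `L≤`: adjacency and linear order. -/
inductive leRel : ℕ → Type
  | adj : leRel 2
  | le : leRel 2

/-- The language `L≤` with adjacency and a linear order. -/
def Lle : Language := ⟨fun _ => Empty, leRel⟩

/-- An outcome `ω` of the random graph on `[n]`, as an `L≤`-structure. -/
def leStructure {n : ℕ} (ω : Sample n) : Lle.Structure (Fin n) where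
  funMap := fun f _ => Empty.elim f
  RelMap
    | .adj => fun x => sampleAdj ω (x 0) (x 1)
    | .le => fun x => x 0 ≤ x 1

/-- Satisfaction of a sentence of `L≤` in the outcome `ω`. -/
def SatLe {n : ℕ} (ω : Sample n) (ψ : Lle.Sentence) : Prop :=
  @Language.Sentence.Realize _ _ (leStructure ω) ψ

/-- `Prob(n, p̄; ψ)` for a sentence `ψ` of `L≤`. -/
noncomputable def ProbLe (p : ℕ → ℝ) (n : ℕ) (ψ : Lle.Sentence) : ℝ :=
  Pr p n fun ω => SatLe ω ψ

/-! ### The circular languages `L₊^c` and `L≤^c` -/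

/-- The relations of `L₊^c`: adjacency and cyclic successor. -/
inductive plusCRel : ℕ → Type
  | adj : plusCRel 2
  | succ : plusCRel 2

/-- The language `L₊^c`, with adjacency and cyclic successor (`x = y + 1 (mod n)`). -/
def LplusC : Language := ⟨fun _ => Empty, plusCRel⟩

/-- An outcome `ω` of the circular random graph on `[n]`, as an `L₊^c`-structure. -/
def plusCStructure {n : ℕ} (ω : Sample n) : LplusC.Structure (Fin n) where
  funMap := fun f _ => Empty.elim f
  RelMap
    | .adj => fun x => sampleAdj ω (x 0) (x 1)
    | .succ => fun x => (x 0).val = ((x 1).val + 1) % n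

/-- The probability that `C(n, p̄)` satisfies a sentence `ψ` of the language `L₊^c`. -/
noncomputable def cProbPlus (p : ℕ → ℝ) (n : ℕ) (ψ : LplusC.Sentence) : ℝ :=
  cPr p n fun ω => @Language.Sentence.Realize _ _ (plusCStructure ω) ψ

/-- The relations of `L≤^c`: adjacency and the ternary clockwise-order predicate. -/
inductive cycRel : ℕ → Type
  | adj : cycRel 2
  | btw : cycRel 3

/-- The language `L≤^c`, with adjacency and the ternary clockwise-order predicate `C`. -/
def Lcyc : Language := ⟨fun _ => Empty, cycRel⟩

/-- `C(a, b, c)`: `a ≤ b ≤ c` holds after some cyclic permutation of `(a, b, c)`. -/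
def cyclicBtw {n : ℕ} (a b c : Fin n) : Prop :=
  (a ≤ b ∧ b ≤ c) ∨ (b ≤ c ∧ c ≤ a) ∨ (c ≤ a ∧ a ≤ b)

/-- An outcome `ω` of the circular random graph on `[n]`, as an `L≤^c`-structure. -/
def cycStructure {n : ℕ} (ω : Sample n) : Lcyc.Structure (Fin n) where
  funMap := fun f _ => Empty.elim f
  RelMap
    | .adj => fun x => sampleAdj ω (x 0) (x 1)
    | .btw => fun x => cyclicBtw (x 0) (x 1) (x 2)

/-- Satisfaction of a sentence of `L≤^c` in the outcome `ω`. -/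
def SatCyc {n : ℕ} (ω : Sample n) (ψ : Lcyc.Sentence) : Prop :=
  @Language.Sentence.Realize _ _ (cycStructure ω) ψ

/-- The probability that `C(n, p̄)` satisfies a sentence `ψ` of the language `L≤^c`. -/
noncomputable def cProbCyc (p : ℕ → ℝ) (n : ℕ) (ψ : Lcyc.Sentence) : ℝ :=
  cPr p n fun ω => SatCyc ω ψ

/-!
Let `ψ` say that some vertex has `m + 1` neighbours of degree one. Put `p i = 1 / 2` for
`i ≤ m + 1`, `p i = 1 - i ^ (-δ)` for `i` in a very sparse set `a 0 < a 1 < …`, and `p i = 0`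
otherwise. On `n = a k` vertices only the lengths up to `m + 1` and the much smaller `a j`, `j < k`,
can occur, so disjoint windows of a fixed length contain such a star independently, each with
probability bounded below, and `ψ` is almost sure. On `n = 2 * a k` vertices every vertex has
exactly one partner at distance `a k`, to which it is joined with probability `1 - (a k) ^ (-δ)`.
All leaves of a star but at most one lie near its centre and miss their partner, so a star exists
with probability `O(a k * (a k) ^ (-δ * m))`, which is small for `δ * m > 1`. The product of the
`1 - p i` up to `n` is dominated by its last sparse factor and stays above `n ^ (-2 * δ)`.
-/

open MeasureTheory ProbabilityTheory Topology Finset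
open scoped unitInterval

section Limits

variable {α ι κ : Type*} [ConditionallyCompleteLinearOrder α] [TopologicalSpace α] [OrderTopology α]
  {f : Filter ι} {g : Filter κ} [NeBot g] {u : ι → α} {φ : κ → ι} {x y : α}

lemma limsup_eq_of_tendsto_comp (hy : ∀ i, y ≤ u i) (hx : ∀ i, u i ≤ x) (hφ : Tendsto φ g f)
    (h : Tendsto (u ∘ φ) g (𝓝 x)) : limsup u f = x := by
  have := hφ.neBot
  refine le_antisymm ?_ ?_
  · exact limsup_le_of_le (isBoundedUnder_of ⟨y, hy⟩).isCoboundedUnder_le (.of_forall hx)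
  · exact (MapClusterPt.of_comp hφ h.mapClusterPt).le_limsup (isBoundedUnder_of ⟨x, hx⟩)

lemma liminf_eq_of_tendsto_comp (hy : ∀ i, y ≤ u i) (hx : ∀ i, u i ≤ x) (hφ : Tendsto φ g f)
    (h : Tendsto (u ∘ φ) g (𝓝 y)) : liminf u f = y :=
  limsup_eq_of_tendsto_comp (α := αᵒᵈ) hx hy hφ h

end Limits

lemma exists_strictMono_forall_image_range {P : ℕ → Finset ℕ → ℕ → Prop}
    (h : ∀ k S, ∀ᶠ a in atTop, P k S a) :
    ∃ a : ℕ → ℕ, StrictMono a ∧ ∀ k, P k ((range k).image a) (a k) := by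
  have hnext : ∀ k (S : Finset ℕ), ∃ a, P k S a ∧ ∀ b ∈ S, b < a := fun k S =>
    ((h k S).and ((eventually_all_finset S).2 fun b _ => eventually_gt_atTop b)).exists
  choose next hP hlt using hnext
  let hist : ℕ → Finset ℕ := fun k => k.rec ∅ fun j S => insert (next j S) S
  let a : ℕ → ℕ := fun k => next k (hist k)
  have hist_eq : ∀ k, hist k = (range k).image a := by
    intro k
    induction k with
    | zero => rfl
    | succ k ih => rw [range_add_one, image_insert, ← ih]
  refine ⟨a, strictMono_nat_of_lt_succ fun k => ?_, fun k => hist_eq k ▸ hP k (hist k)⟩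
  exact hlt (k + 1) (hist (k + 1)) (a k) (mem_insert_self _ _)

section Independence

variable {Ω κ : Type*} {mΩ : MeasurableSpace Ω} {μ : Measure Ω} {A : κ → Set Ω}

lemma measure_biInter_compl_of_iIndepSet (hA : iIndepSet A μ) (s : Finset κ) :
    μ (⋂ k ∈ s, (A k)ᶜ) = ∏ k ∈ s, μ (A k)ᶜ :=
  ((iIndepSet_iff_iIndep A μ).1 hA).meas_biInter fun _ _ =>
    (MeasurableSpace.measurableSet_generateFrom (Set.mem_singleton _)).compl

lemma one_sub_pow_le_measureReal_biUnion (hA : iIndepSet A μ) (hm : ∀ k, MeasurableSet (A k))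
    {s : Finset κ} {q : ℝ} (hq : ∀ k ∈ s, q ≤ μ.real (A k)) :
    1 - (1 - q) ^ #s ≤ μ.real (⋃ k ∈ s, A k) := by
  have := hA.isProbabilityMeasure
  have hmiss : μ.real (⋃ k ∈ s, A k)ᶜ ≤ (1 - q) ^ #s := by
    rw [Set.compl_iUnion₂, measureReal_def, measure_biInter_compl_of_iIndepSet hA,
      ENNReal.toReal_prod]
    calc ∏ k ∈ s, μ.real (A k)ᶜ
        ≤ ∏ _k ∈ s, (1 - q) := prod_le_prod (fun _ _ => measureReal_nonneg) fun k hk => by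
          rw [probReal_compl_eq_one_sub (hm k)]
          exact sub_le_sub_left (hq k hk) 1
      _ = (1 - q) ^ #s := prod_const _
  rw [probReal_compl_eq_one_sub (s.measurableSet_biUnion fun k _ => hm k)] at hmiss
  linarith

variable {ι : Type*} [Fintype ι] {X : ι → Type*} [∀ i, MeasurableSpace (X i)]
  (ν : ∀ i, Measure (X i)) [∀ i, IsProbabilityMeasure (ν i)] {t : ∀ i, Set (X i)}

lemma measure_pi_finset_pi (ht : ∀ i, MeasurableSet (t i)) (s : Finset ι) :
    Measure.pi ν (Set.pi s t) = ∏ i ∈ s, ν i (t i) := by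
  rw [← Measure.infinitePi_eq_pi, Measure.infinitePi_pi ν fun i _ => ht i]

lemma iIndepSet_pi_of_pairwise_disjoint {B : κ → Finset ι}
    (hB : Pairwise (Function.onFun Disjoint B)) (ht : ∀ i, MeasurableSet (t i)) :
    iIndepSet (fun k => Set.pi (B k) t) (Measure.pi ν) := by
  classical
  have hm : ∀ k, MeasurableSet (Set.pi (B k : Set ι) t) := fun k =>
    .pi (B k).countable_toSet fun i _ => ht i
  rw [iIndepSet_iff_meas_biInter hm]
  intro s
  have hinter : ⋂ k ∈ s, Set.pi (B k : Set ι) t = Set.pi (s.biUnion B : Finset ι) t := by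
    ext ω
    simp only [Set.mem_iInter, Set.mem_pi, mem_coe, mem_biUnion]
    grind
  rw [hinter, measure_pi_finset_pi ν ht, prod_biUnion fun i _ j _ hij => hB hij]
  exact prod_congr rfl fun k _ => (measure_pi_finset_pi ν ht (B k)).symm

end Independence

/-! ### The law of the random graph -/

/-- The length `|v - w|` of a potential edge `{v, w}`. -/
def edgeLength {n : ℕ} (e : EdgeIdx n) : ℕ := e.1.2.val - e.1.1.val

/-- The law of `G(n, p̄)` as a product of Bernoulli measures, one for each potential edge.
The probabilities are bundled in the unit interval so that this is always a probability measure. -/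
noncomputable def graphMeasure (p : ℕ → I) (n : ℕ) : Measure (Sample n) :=
  Measure.pi fun e => bernoulliMeasure true false (p (edgeLength e))

section GraphMeasure

variable {p q : ℕ → I} {n : ℕ}

instance : IsProbabilityMeasure (graphMeasure p n) := by
  unfold graphMeasure
  infer_instance

lemma graphMeasure_congr (h : ∀ i < n, p i = q i) : graphMeasure p n = graphMeasure q n := by
  have hlen (e : EdgeIdx n) : edgeLength e < n := (Nat.sub_le _ _).trans_lt e.1.2.isLt
  simp only [graphMeasure, h _ (hlen _)]

lemma bernoulliMeasure_real_singleton_bool (q : I) (b : Bool) :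
    (bernoulliMeasure true false q).real {b} = if b then (q : ℝ) else 1 - q := by
  cases b <;> simp

lemma graphMeasure_real_pi_singleton (B : Finset (EdgeIdx n)) (τ : Sample n) :
    (graphMeasure p n).real (Set.pi B fun e => {τ e}) =
      ∏ e ∈ B, if τ e then (p (edgeLength e) : ℝ) else 1 - p (edgeLength e) := by
  rw [measureReal_def, graphMeasure, measure_pi_finset_pi _ fun _ => .singleton _,
    ENNReal.toReal_prod]
  exact prod_congr rfl fun e _ => bernoulliMeasure_real_singleton_bool _ _

lemma graphMeasure_real_singleton (ω : Sample n) :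
    (graphMeasure p n).real {ω} = sampleWeight (fun i => p i) ω := by
  rw [← Set.univ_pi_singleton, ← coe_univ, graphMeasure_real_pi_singleton]
  rfl

lemma Pr_eq_graphMeasure_real (P : Sample n → Prop) :
    Pr (fun i => p i) n P = (graphMeasure p n).real {ω | P ω} := by
  classical
  rw [Pr, ← sum_filter, ← coe_filter_univ, ← sum_measureReal_singleton]
  exact sum_congr rfl fun ω _ => (graphMeasure_real_singleton ω).symm

lemma ae_graphMeasure_ne_zero_of_eq_true :
    ∀ᵐ ω ∂graphMeasure p n, ∀ e, ω e = true → p (edgeLength e) ≠ 0 := by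
  refine ae_all_iff.2 fun e => ?_
  by_cases he : p (edgeLength e) = 0
  · have hfalse : ∀ᵐ b ∂bernoulliMeasure true false (p (edgeLength e)), b = false := by
      rw [he, bernoulliMeasure_zero]
      exact ae_dirac_iff (.singleton false) |>.2 rfl
    filter_upwards [(Measure.tendsto_eval_ae_ae (i := e)).eventually hfalse] with ω hω htrue
    simp_all
  · exact .of_forall fun _ _ => he

lemma graphMeasure_real_le_of_imp {P Q : Sample n → Prop}
    (h : ∀ ω, (∀ e, ω e = true → p (edgeLength e) ≠ 0) → P ω → Q ω) :
    (graphMeasure p n).real {ω | P ω} ≤ (graphMeasure p n).real {ω | Q ω} :=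
  ENNReal.toReal_mono (measure_ne_top _ _) <| measure_mono_ae <|
    ae_graphMeasure_ne_zero_of_eq_true.mono h

end GraphMeasure

/-! ### Pendant stars -/

/-- `ω` has a vertex with at least `s` neighbours of degree one. -/
def HasPendantStar (s : ℕ) {n : ℕ} (ω : Sample n) : Prop :=
  ∃ (c : Fin n) (x : Fin s → Fin n), Function.Injective x ∧
    ∀ i, sampleAdj ω (x i) c ∧ ∀ y, sampleAdj ω (x i) y → y = c

/-- The formula saying that `x` has `c` as its only neighbour. -/
noncomputable def pendantFormula {α : Type*} (x c : α) : Language.graph.Formula α :=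
  Language.adj.formula₂ (.var x) (.var c) ⊓
    Language.Formula.iAlls Unit
      (.imp (Language.adj.formula₂ (.var (.inl x)) (.var (.inr ())))
        (Language.Term.equal (.var (.inr ())) (.var (.inl c))))

/-- The sentence expressing `HasPendantStar s`; the variable `none` is the centre of the star. -/
noncomputable def pendantStarSentence (s : ℕ) : Language.graph.Sentence :=
  Language.Formula.iExs (Option (Fin s))
    (Language.Formula.iInf (fun ij : {ij : Fin s × Fin s // ij.1 ≠ ij.2} =>
        ∼(Language.Term.equal (.var (.inr (some ij.1.1))) (.var (.inr (some ij.1.2))))) ⊓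
      Language.Formula.iInf (fun i => pendantFormula (.inr (some i)) (.inr none)))

open Language in
lemma satL_pendantStarSentence {s n : ℕ} {ω : Sample n} :
    SatL ω (pendantStarSentence s) ↔ HasPendantStar s ω := by
  let _ := graphStructure ω
  have hpendant {α : Type} {v : α → Fin n} {x c : α} : (pendantFormula x c).Realize v ↔
      sampleAdj ω (v x) (v c) ∧ ∀ y, sampleAdj ω (v x) y → y = v c := by
    simp only [pendantFormula, Formula.realize_inf, Formula.realize_iAlls, Formula.realize_imp,
      Formula.realize_rel₂, Formula.realize_equal, Term.realize_var, Sum.elim_inl, Sum.elim_inr]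
    exact and_congr Iff.rfl ⟨fun h y => h fun _ => y, fun h y => h (y ())⟩
  have hsat : SatL ω (pendantStarSentence s) ↔ ∃ z : Option (Fin s) → Fin n,
      (∀ i j, z (some i) = z (some j) → i = j) ∧ ∀ i, sampleAdj ω (z (some i)) (z none) ∧
        ∀ y, sampleAdj ω (z (some i)) y → y = z none := by
    simp only [SatL, Sentence.Realize, pendantStarSentence, Formula.realize_iExs,
      Formula.realize_inf, Formula.realize_iInf, Formula.realize_not, Formula.realize_equal,
      hpendant, Term.realize_var, Sum.elim_inr, Subtype.forall, Prod.forall, ne_eq, not_imp_not]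
  rw [hsat, HasPendantStar]
  constructor
  · rintro ⟨z, hinj, hz⟩
    exact ⟨z none, z ∘ some, hinj, hz⟩
  · rintro ⟨c, x, hinj, hx⟩
    exact ⟨fun o => o.elim c x, hinj, hx⟩

lemma probL_pendantStarSentence {p : ℕ → I} {s n : ℕ} :
    ProbL (fun i => p i) n (pendantStarSentence s) =
      (graphMeasure p n).real {ω | HasPendantStar s ω} := by
  simp only [ProbL, Pr_eq_graphMeasure_real, satL_pendantStarSentence]

/-! ### Stars are likely when edge lengths are bounded -/

section Windows

variable {p : ℕ → I} {n L t s D : ℕ} {ω : Sample n}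

/-- The potential edges inside the `t`-th window `[t * L, (t + 1) * L)`. -/
def windowEdges (n L t : ℕ) : Finset (EdgeIdx n) :=
  {e | e.1.1.val / L = t ∧ e.1.2.val / L = t}

/-- The edge pattern which, in each window of length `L`, joins the vertex at offset `D` to the
`s` vertices following it and has no other edges. -/
def starPattern (n s D L : ℕ) : Sample n :=
  fun e => decide (e.1.1.val % L = D ∧ edgeLength e ≤ s)

lemma pairwise_disjoint_windowEdges :
    Pairwise (Function.onFun Disjoint (windowEdges n L)) := by
  intro t u htu
  simp only [Function.onFun, disjoint_left, windowEdges, mem_filter_univ]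
  grind

lemma card_windowEdges_le (hL : 0 < L) : #(windowEdges n L t) ≤ L ^ 2 := by
  calc #(windowEdges n L t)
      ≤ #(range L ×ˢ range L) :=
        card_le_card_of_injOn (fun e => (e.1.1.val % L, e.1.2.val % L)) ?_ ?_
    _ = L ^ 2 := by rw [card_product, card_range, sq]
  · intro e _
    simp [Nat.mod_lt _ hL]
  · intro e he f hf hef
    simp only [windowEdges, coe_filter, mem_univ, true_and, Set.mem_ofPred_eq] at he hf
    simp only [Prod.mk.injEq] at hef
    ext
    · exact Nat.ext_div_mod (he.1.trans hf.1.symm) hef.1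
    · exact Nat.ext_div_mod (he.2.trans hf.2.symm) hef.2

lemma hasPendantStar_of_starPattern (hL : L = 2 * D + s + 1) (ht : t < n / L)
    (hlen : ∀ e, ω e = true → edgeLength e ≤ D)
    (hω : ∀ e ∈ windowEdges n L t, ω e = starPattern n s D L e) : HasPendantStar s ω := by
  have hL0 : 0 < L := by omega
  have hn : (t + 1) * L ≤ n := (Nat.le_div_iff_mul_le hL0).1 ht
  have hdiv {v : ℕ} : v / L = t ↔ t * L ≤ v ∧ v < t * L + L := by
    rw [Nat.div_eq_iff hL0]
    omega
  have hmod {v : ℕ} (hv : v / L = t) : v % L = D ↔ v = t * L + D := by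
    have := Nat.div_add_mod' v L
    rw [hv] at this
    omega
  rw [add_one_mul] at hn
  have hedge {e} (h₁ : t * L ≤ e.1.1.val) (h₂ : e.1.2.val < t * L + L) :
      ω e = true ↔ e.1.1.val = t * L + D ∧ edgeLength e ≤ s := by
    have : e.1.1.val < e.1.2.val := e.2
    have he₁ : e.1.1.val / L = t := hdiv.2 (by omega)
    have he₂ : e.1.2.val / L = t := hdiv.2 (by omega)
    rw [hω e (mem_filter_univ e |>.2 ⟨he₁, he₂⟩), starPattern, decide_eq_true_iff, hmod he₁]
  refine ⟨⟨t * L + D, by omega⟩, fun i => ⟨t * L + D + 1 + i, by omega⟩, ?_, fun i => ⟨?_, ?_⟩⟩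
  · intro i j hij
    simpa [Fin.ext_iff] using hij
  · refine ⟨⟨(⟨t * L + D, by omega⟩, ⟨t * L + D + 1 + i, by omega⟩), ?_⟩, ?_, .inr ⟨rfl, rfl⟩⟩
    · simp only [Fin.mk_lt_mk]
      omega
    · rw [hedge] <;> simp only [edgeLength, true_and] <;> omega
  · rintro y ⟨e, he, hxy⟩
    have hle := hlen e he
    have hlt : e.1.1.val < e.1.2.val := e.2
    rw [edgeLength] at hle
    have hstart := ((hedge (by grind) (by grind)).1 he).1
    simp only [Fin.ext_iff] at hxy ⊢
    omega

lemma exists_pos_forall_le_and_le_one_sub (hlt : ∀ i, p i < 1) (hfar : ∀ i, D < i → p i = 0)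
    (hpos : ∀ i ∈ Icc 1 s, 0 < p i) :
    ∃ r : ℝ, 0 < r ∧ (∀ i ∈ Icc 1 s, r ≤ p i) ∧ ∀ i, r ≤ 1 - p i := by
  have hsmall {x : ℝ} (hx : 0 < x) : ∀ᶠ r in 𝓝[>] (0 : ℝ), r ≤ x :=
    (eventually_le_nhds hx).filter_mono nhdsWithin_le_nhds
  obtain ⟨r, ⟨hr, hedge⟩, hnonedge⟩ := ((eventually_mem_nhdsWithin.and
    ((eventually_all_finset (Icc 1 s)).2 fun i hi => hsmall (hpos i hi))).and
    ((eventually_all_finset (range (D + 2))).2 fun i _ => hsmall (sub_pos.2 (hlt i)))).exists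
  refine ⟨r, hr, hedge, fun i => ?_⟩
  by_cases hi : i ≤ D
  · exact hnonedge i (mem_range.2 (by omega))
  · rw [hfar i (by omega), ← hfar (D + 1) (by omega)]
    exact hnonedge (D + 1) (by simp)

lemma pow_le_graphMeasure_real_starPattern (hL : 0 < L) {r : ℝ} (hr : 0 < r)
    (hedge : ∀ i ∈ Icc 1 s, r ≤ p i) (hnonedge : ∀ i, r ≤ 1 - p i) :
    r ^ L ^ 2 ≤
      (graphMeasure p n).real (Set.pi (windowEdges n L t) fun e => {starPattern n s D L e}) := by
  have hr1 : r ≤ 1 := (hnonedge 0).trans (sub_le_self 1 (p 0).2.1)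
  calc r ^ L ^ 2
      ≤ r ^ #(windowEdges n L t) := pow_le_pow_of_le_one hr.le hr1 (card_windowEdges_le hL)
    _ = ∏ _e ∈ windowEdges n L t, r := (prod_const r).symm
    _ ≤ _ := ?_
  rw [graphMeasure_real_pi_singleton]
  refine prod_le_prod (fun _ _ => hr.le) fun e _ => ?_
  split_ifs with he
  · rw [starPattern, decide_eq_true_iff] at he
    exact hedge _ (mem_Icc.2 ⟨Nat.sub_pos_of_lt e.2, he.2⟩)
  · exact hnonedge _

lemma tendsto_graphMeasure_real_hasPendantStar (hlt : ∀ i, p i < 1)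
    (hfar : ∀ i, D < i → p i = 0) (hpos : ∀ i ∈ Icc 1 s, 0 < p i) :
    Tendsto (fun n => (graphMeasure p n).real {ω | HasPendantStar s ω}) atTop (𝓝 1) := by
  obtain ⟨r, hr, hedge, hnonedge⟩ := exists_pos_forall_le_and_le_one_sub hlt hfar hpos
  set L := 2 * D + s + 1 with hL
  set q := r ^ L ^ 2
  have hbound (n : ℕ) :
      1 - (1 - q) ^ (n / L) ≤ (graphMeasure p n).real {ω | HasPendantStar s ω} := by
    let window (t : ℕ) : Set (Sample n) :=
      Set.pi (windowEdges n L t) fun e => {starPattern n s D L e}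
    have hindep : iIndepSet window (graphMeasure p n) :=
      iIndepSet_pi_of_pairwise_disjoint _ pairwise_disjoint_windowEdges fun _ => .singleton _
    calc 1 - (1 - q) ^ (n / L)
        ≤ (graphMeasure p n).real (⋃ t ∈ range (n / L), window t) := by
          simpa only [card_range] using one_sub_pow_le_measureReal_biUnion (s := range (n / L))
            hindep (fun _ => .of_discrete) fun t _ =>
              pow_le_graphMeasure_real_starPattern (by omega) hr hedge hnonedge
      _ ≤ (graphMeasure p n).real {ω | HasPendantStar s ω} := by
          refine graphMeasure_real_le_of_imp fun ω hsupp hω => ?_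
          obtain ⟨t, ht, hwin⟩ := Set.mem_iUnion₂.1 hω
          refine hasPendantStar_of_starPattern hL (mem_range.1 ht) (fun e he => ?_) hwin
          exact not_lt.1 fun h => hsupp e he (hfar _ h)
  refine tendsto_of_tendsto_of_tendsto_of_le_of_le ?_ tendsto_const_nhds hbound
    fun n => measureReal_le_one
  have hq0 : 0 < q := pow_pos hr _
  have hq1 : q ≤ 1 := pow_le_one₀ hr.le ((hnonedge 0).trans (sub_le_self 1 (p 0).2.1))
  have hpow := (tendsto_pow_atTop_nhds_zero_of_lt_one (sub_nonneg.2 hq1) (by linarith)).comp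
    (Nat.tendsto_div_const_atTop (show L ≠ 0 by omega))
  simpa only [sub_zero, Function.comp_apply] using hpow.const_sub 1

end Windows

/-! ### Stars are unlikely when half of the vertices are matched to the other half -/

section CrossEdges

variable {p : ℕ → I} {a m D : ℕ}

/-- The edge of length `a` joining `u` and `u + a` in `Fin (2 * a)`. -/
def crossEdge (u : Fin a) : EdgeIdx (2 * a) :=
  ⟨(⟨u, by omega⟩, ⟨u + a, by omega⟩), by simp only [Fin.mk_lt_mk]; omega⟩

lemma edgeLength_crossEdge (u : Fin a) : edgeLength (crossEdge u) = a := by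
  simp [edgeLength, crossEdge]

lemma crossEdge_injective : Function.Injective (crossEdge (a := a)) := by
  intro u v h
  simpa [crossEdge, Fin.ext_iff] using h

/-- The vertices at distance at most `D` from `c`. -/
def nearVertices {n : ℕ} (D : ℕ) (c : Fin n) : Finset (Fin n) :=
  {v | v.val ≤ c + D ∧ c.val ≤ v + D}

lemma mem_nearVertices {n : ℕ} {v c : Fin n} :
    v ∈ nearVertices D c ↔ v.val ≤ c + D ∧ c.val ≤ v + D :=
  mem_filter_univ v

lemma card_nearVertices_le {n : ℕ} (c : Fin n) : #(nearVertices D c) ≤ 2 * D + 1 := by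
  calc #(nearVertices D c)
      ≤ #(Icc (c.val - D) (c + D)) :=
        card_le_card_of_injOn Fin.val (fun v hv => ?_) Fin.val_injective.injOn
    _ ≤ 2 * D + 1 := by
        rw [Nat.card_Icc]
        omega
  have := mem_nearVertices.1 hv
  simp only [coe_Icc, Set.mem_Icc]
  omega

lemma modNat_eq_or_add_eq (v : Fin (2 * a)) :
    (v.modNat : ℕ) = v ∨ (v.modNat : ℕ) + a = v := by
  rw [Fin.coe_modNat]
  rcases lt_or_ge v.val a with h | h
  · exact .inl (Nat.mod_eq_of_lt h)
  · rw [Nat.mod_eq_sub_mod h, Nat.mod_eq_of_lt (by omega)]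
    omega

lemma injOn_modNat_nearVertices (ha : 2 * D < a) (c : Fin (2 * a)) :
    Set.InjOn Fin.modNat (nearVertices D c : Set (Fin (2 * a))) := by
  intro v hv w hw hvw
  have := mem_nearVertices.1 hv
  have := mem_nearVertices.1 hw
  have := modNat_eq_or_add_eq v
  have := modNat_eq_or_add_eq w
  rw [hvw] at *
  omega

variable {ω : Sample (2 * a)}

lemma exists_sampleAdj_of_crossEdge_modNat {v : Fin (2 * a)}
    (h : ω (crossEdge v.modNat) = true) :
    ∃ w : Fin (2 * a), sampleAdj ω v w ∧ (w.val = v + a ∨ v.val = w + a) := by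
  rcases modNat_eq_or_add_eq v with hv | hv
  · exact ⟨⟨v.modNat + a, by omega⟩, ⟨_, h, .inl ⟨hv, rfl⟩⟩, .inl (by simp only [hv])⟩
  · exact ⟨⟨v.modNat, by omega⟩, ⟨_, h, .inr ⟨rfl, hv⟩⟩, .inr hv.symm⟩

-- A leaf of the star other than the antipode of the centre lies near the centre, and its only
-- edge goes there, so its cross edge is missing.
lemma exists_absent_crossEdges_of_hasPendantStar (ha : 2 * D < a)
    (hlen : ∀ e, ω e = true → edgeLength e ≤ D ∨ edgeLength e = a)
    (hω : HasPendantStar (m + 1) ω) :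
    ∃ c : Fin (2 * a), ∃ U ∈ powersetCard m ((nearVertices D c).image Fin.modNat),
      ∀ u ∈ U, ω (crossEdge u) = false := by
  classical
  obtain ⟨c, x, hinj, hx⟩ := hω
  have hfar (i) (hi : x i ∉ nearVertices D c) : (x i).val + a = c ∨ c + a = (x i).val := by
    obtain ⟨e, he, hends⟩ := (hx i).1
    have hle := hlen e he
    have : e.1.1.val < e.1.2.val := e.2
    simp only [edgeLength, mem_nearVertices] at hle hi
    omega
  let N : Finset (Fin (m + 1)) := {i | x i ∈ nearVertices D c}
  have hN {i} (hi : i ∈ N) : x i ∈ nearVertices D c := (mem_filter_univ i).1 hi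
  have hcard : m ≤ #N := by
    have hone : #Nᶜ ≤ 1 := card_le_one.2 fun i hi j hj => hinj <| Fin.ext <| by
      have := hfar i (by simpa [N] using hi)
      have := hfar j (by simpa [N] using hj)
      omega
    rw [card_compl, Fintype.card_fin] at hone
    omega
  have hres : Set.InjOn (fun i => (x i).modNat) N :=
    (injOn_modNat_nearVertices ha c).comp hinj.injOn fun _ => hN
  obtain ⟨U, hU, hUm⟩ := exists_subset_card_eq (hcard.trans_eq (card_image_of_injOn hres).symm)
  refine ⟨c, U, mem_powersetCard.2 ⟨hU.trans ?_, hUm⟩, fun u hu => ?_⟩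
  · exact image_subset_iff.2 fun i hi => mem_image_of_mem Fin.modNat (hN hi)
  · obtain ⟨i, hi, rfl⟩ := mem_image.1 (hU hu)
    by_contra hpresent
    obtain ⟨w, hw, hdist⟩ := exists_sampleAdj_of_crossEdge_modNat (eq_true_of_ne_false hpresent)
    have hnear := mem_nearVertices.1 (hN hi)
    rw [(hx i).2 w hw] at hdist
    omega

lemma graphMeasure_real_crossEdges_absent (U : Finset (Fin a)) :
    (graphMeasure p (2 * a)).real {ω | ∀ u ∈ U, ω (crossEdge u) = false} =
      (1 - (p a : ℝ)) ^ #U := by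
  have hpi : {ω : Sample (2 * a) | ∀ u ∈ U, ω (crossEdge u) = false} =
      Set.pi (U.image crossEdge : Finset _) fun _ => {false} := by
    ext ω
    simp
  rw [hpi, graphMeasure_real_pi_singleton _ fun _ => false,
    prod_image crossEdge_injective.injOn]
  simp [edgeLength_crossEdge]

lemma graphMeasure_real_hasPendantStar_le (ha : 2 * D < a)
    (hsupp : ∀ i, D < i → i ≠ a → p i = 0) :
    (graphMeasure p (2 * a)).real {ω | HasPendantStar (m + 1) ω} ≤
      (2 * a * 2 ^ (2 * D + 1)) * (1 - (p a : ℝ)) ^ m := by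
  let leaves : Finset (Finset (Fin a)) :=
    univ.biUnion fun c : Fin (2 * a) => powersetCard m ((nearVertices D c).image Fin.modNat)
  have hcard : #leaves ≤ 2 * a * 2 ^ (2 * D + 1) := by
    refine (card_biUnion_le_card_mul univ _ (2 ^ (2 * D + 1)) fun c _ => ?_).trans_eq ?_
    · rw [card_powersetCard]
      exact (Nat.choose_le_two_pow _ _).trans <|
        Nat.pow_le_pow_right two_pos (card_image_le.trans (card_nearVertices_le c))
    · rw [card_univ, Fintype.card_fin]
  calc (graphMeasure p (2 * a)).real {ω | HasPendantStar (m + 1) ω}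
      ≤ (graphMeasure p (2 * a)).real
          (⋃ U ∈ leaves, {ω | ∀ u ∈ U, ω (crossEdge u) = false}) := by
        refine graphMeasure_real_le_of_imp fun ω hω hstar => ?_
        have hlen (e) (he : ω e = true) : edgeLength e ≤ D ∨ edgeLength e = a := by
          by_contra! h
          exact hω e he (hsupp _ h.1 h.2)
        obtain ⟨c, U, hU, hmiss⟩ := exists_absent_crossEdges_of_hasPendantStar ha hlen hstar
        exact Set.mem_iUnion₂.2 ⟨U, mem_biUnion.2 ⟨c, mem_univ c, hU⟩, hmiss⟩
    _ ≤ ∑ U ∈ leaves, (graphMeasure p (2 * a)).real {ω | ∀ u ∈ U, ω (crossEdge u) = false} :=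
        measureReal_biUnion_finset_le _ _
    _ = #leaves * (1 - (p a : ℝ)) ^ m := by
        rw [← nsmul_eq_mul]
        refine sum_eq_card_nsmul fun U hU => ?_
        obtain ⟨c, -, hU⟩ := mem_biUnion.1 hU
        rw [graphMeasure_real_crossEdges_absent, (mem_powersetCard.1 hU).2]
    _ ≤ (2 * a * 2 ^ (2 * D + 1)) * (1 - (p a : ℝ)) ^ m := by
        refine mul_le_mul_of_nonneg_right ?_ (pow_nonneg (sub_nonneg.2 (p a).2.2) m)
        exact_mod_cast hcard

end CrossEdges

/-! ### The sparse sequence of edge lengths -/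

section EdgeProb

open scoped Classical in
/-- The edge probabilities of the counterexample: `1 / 2` up to length `s`, and `1 - i ^ (-δ)` at
the lengths `i ∈ A` beyond `s`. The projection to the unit interval does nothing for `0 ≤ δ`. -/
noncomputable def edgeProb (s : ℕ) (δ : ℝ) (A : Set ℕ) (i : ℕ) : I :=
  if i ≤ s then ⟨1 / 2, by norm_num, by norm_num⟩
  else if i ∈ A then Set.projIcc 0 1 zero_le_one (1 - (i : ℝ) ^ (-δ)) else 0

variable {s m i a : ℕ} {δ : ℝ} {A B : Set ℕ} {S : Finset ℕ}

lemma edgeProb_congr (h : i ∈ A ↔ i ∈ B) : edgeProb s δ A i = edgeProb s δ B i := by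
  grind [edgeProb]

lemma coe_edgeProb_of_le (hi : i ≤ s) : (edgeProb s δ A i : ℝ) = 1 / 2 := by
  rw [edgeProb, if_pos hi]

lemma edgeProb_of_notMem (hi : s < i) (hA : i ∉ A) : edgeProb s δ A i = 0 := by
  rw [edgeProb, if_neg hi.not_ge, if_neg hA]

lemma one_sub_edgeProb_of_mem (hδ : 0 ≤ δ) (hi : s < i) (hA : i ∈ A) :
    1 - (edgeProb s δ A i : ℝ) = (i : ℝ) ^ (-δ) := by
  have hle : (i : ℝ) ^ (-δ) ≤ 1 :=
    Real.rpow_le_one_of_one_le_of_nonpos (by exact_mod_cast (Nat.zero_le s).trans_lt hi)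
      (neg_nonpos.2 hδ)
  rw [edgeProb, if_neg hi.not_ge, if_pos hA, Set.projIcc_of_mem zero_le_one
    ⟨sub_nonneg.2 hle, sub_le_self 1 (by positivity)⟩, sub_sub_cancel]

lemma one_sub_edgeProb_pos (hδ : 0 ≤ δ) (A : Set ℕ) (i : ℕ) :
    0 < 1 - (edgeProb s δ A i : ℝ) := by
  rcases le_or_gt i s with hi | hi
  · rw [coe_edgeProb_of_le hi]
    norm_num
  by_cases hA : i ∈ A
  · rw [one_sub_edgeProb_of_mem hδ hi hA]
    have : 0 < i := (Nat.zero_le s).trans_lt hi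
    positivity
  · simp [edgeProb_of_notMem hi hA]

lemma exists_forall_gt_edgeProb_eq_zero (s : ℕ) (δ : ℝ) (S : Finset ℕ) :
    ∃ D, ∀ i, D < i → edgeProb s δ S i = 0 := by
  obtain ⟨D, hD⟩ := (insert s S).bddAbove
  refine ⟨D, fun i hi => edgeProb_of_notMem ?_ fun hiS => ?_⟩
  · exact (hD (mem_insert_self s S)).trans_lt hi
  · exact hi.not_ge (hD (mem_insert_of_mem hiS))

lemma tendsto_graphMeasure_real_edgeProb_finset (hδ : 0 ≤ δ) (s : ℕ) (S : Finset ℕ) :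
    Tendsto (fun n => (graphMeasure (edgeProb s δ S) n).real {ω | HasPendantStar s ω}) atTop
      (𝓝 1) := by
  obtain ⟨D, hD⟩ := exists_forall_gt_edgeProb_eq_zero s δ S
  refine tendsto_graphMeasure_real_hasPendantStar
    (fun i => Subtype.coe_lt_coe.1 (sub_pos.1 (one_sub_edgeProb_pos hδ S i))) hD fun i hi => ?_
  rw [← Subtype.coe_lt_coe, coe_edgeProb_of_le (mem_Icc.1 hi).2]
  norm_num

lemma graphMeasure_real_edgeProb_insert_le (hδ : 0 ≤ δ) {D : ℕ}
    (hD : ∀ i, D < i → edgeProb (m + 1) δ A i = 0) (ha : 2 * D < a) (hma : m + 1 < a) :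
    (graphMeasure (edgeProb (m + 1) δ (insert a A)) (2 * a)).real
        {ω | HasPendantStar (m + 1) ω} ≤
      (2 * 2 ^ (2 * D + 1)) * (a : ℝ) ^ (-(δ * m - 1)) := by
  have ha0 : (0 : ℝ) < a := by exact_mod_cast (Nat.zero_le _).trans_lt hma
  refine (graphMeasure_real_hasPendantStar_le ha fun i hDi hia => ?_).trans_eq ?_
  · rw [edgeProb_congr (Set.mem_insert_iff.trans (or_iff_right hia)), hD i hDi]
  · rw [one_sub_edgeProb_of_mem hδ hma (Set.mem_insert a A), ← Real.rpow_mul_natCast ha0.le,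
      show -(δ * m - 1) = 1 + -δ * m by ring, Real.rpow_add ha0, Real.rpow_one]
    ring

lemma tendsto_graphMeasure_real_edgeProb_insert (hδ : 0 ≤ δ) (hm : 1 < δ * m) (S : Finset ℕ) :
    Tendsto (fun a : ℕ => (graphMeasure (edgeProb (m + 1) δ (insert a S)) (2 * a)).real
      {ω | HasPendantStar (m + 1) ω}) atTop (𝓝 0) := by
  obtain ⟨D, hD⟩ := exists_forall_gt_edgeProb_eq_zero (m + 1) δ S
  have hlim : Tendsto (fun a : ℕ => (2 * 2 ^ (2 * D + 1)) * (a : ℝ) ^ (-(δ * m - 1))) atTop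
      (𝓝 0) := by
    simpa only [mul_zero, Function.comp_apply] using ((tendsto_rpow_neg_atTop (sub_pos.2 hm)).comp
      tendsto_natCast_atTop_atTop).const_mul (2 * 2 ^ (2 * D + 1))
  refine squeeze_zero' (.of_forall fun _ => measureReal_nonneg) ?_ hlim
  filter_upwards [eventually_gt_atTop (2 * D), eventually_gt_atTop (m + 1)] with a ha hma
  exact graphMeasure_real_edgeProb_insert_le hδ hD ha hma

lemma eventually_rpow_neg_le_prod_one_sub_edgeProb (hδ : 0 < δ) (s : ℕ) (S : Finset ℕ) :
    ∀ᶠ a : ℕ in atTop, ∀ n,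
      (a : ℝ) ^ (-δ) ≤ ∏ i ∈ Icc 1 n, (1 - (edgeProb s δ S i : ℝ)) := by
  obtain ⟨D, hD⟩ := exists_forall_gt_edgeProb_eq_zero s δ S
  have hpos : 0 < ∏ i ∈ Icc 1 D, (1 - (edgeProb s δ S i : ℝ)) :=
    prod_pos fun i _ => one_sub_edgeProb_pos hδ.le S i
  have hlim : Tendsto (fun a : ℕ => (a : ℝ) ^ (-δ)) atTop (𝓝 0) :=
    (tendsto_rpow_neg_atTop hδ).comp tendsto_natCast_atTop_atTop
  filter_upwards [hlim.eventually_le_const hpos] with a ha n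
  calc (a : ℝ) ^ (-δ)
      ≤ ∏ i ∈ Icc 1 D, (1 - (edgeProb s δ S i : ℝ)) := ha
    _ = ∏ i ∈ Icc 1 (max D n), (1 - (edgeProb s δ S i : ℝ)) := by
        refine prod_subset (Icc_subset_Icc_right (le_max_left D n)) fun i hi hiD => ?_
        rw [hD i (by simp only [mem_Icc] at hi hiD; omega), Set.Icc.coe_zero, sub_zero]
    _ ≤ ∏ i ∈ Icc 1 n, (1 - (edgeProb s δ S i : ℝ)) :=
        prod_le_prod_of_subset_of_le_one (Icc_subset_Icc_right (le_max_right D n))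
          (fun i _ => (one_sub_edgeProb_pos hδ.le S i).le)
          fun i _ _ => sub_le_self 1 (edgeProb s δ S i).2.1

lemma prod_mul_rpow_le_prod_one_sub_edgeProb_insert (hδ : 0 ≤ δ) (ha : s < a) (n : ℕ) :
    (∏ i ∈ Icc 1 n, (1 - (edgeProb s δ A i : ℝ))) * (a : ℝ) ^ (-δ) ≤
      ∏ i ∈ Icc 1 n, (1 - (edgeProb s δ (insert a A) i : ℝ)) := by
  have hmem := one_sub_edgeProb_of_mem hδ ha (Set.mem_insert a A)
  have hle : (a : ℝ) ^ (-δ) ≤ 1 := hmem ▸ sub_le_self 1 (edgeProb s δ (insert a A) a).2.1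
  have hnonneg (B : Set ℕ) (i : ℕ) : 0 ≤ 1 - (edgeProb s δ B i : ℝ) :=
    (one_sub_edgeProb_pos hδ B i).le
  calc (∏ i ∈ Icc 1 n, (1 - (edgeProb s δ A i : ℝ))) * (a : ℝ) ^ (-δ)
      ≤ (∏ i ∈ Icc 1 n, (1 - (edgeProb s δ A i : ℝ))) *
          ∏ i ∈ Icc 1 n, (if i = a then (a : ℝ) ^ (-δ) else 1) := by
        refine mul_le_mul_of_nonneg_left ?_ (prod_nonneg fun i _ => hnonneg A i)
        rw [prod_ite_eq']
        split_ifs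
        exacts [le_rfl, hle]
    _ = ∏ i ∈ Icc 1 n, (1 - (edgeProb s δ A i : ℝ)) * (if i = a then (a : ℝ) ^ (-δ) else 1) :=
        prod_mul_distrib.symm
    _ ≤ ∏ i ∈ Icc 1 n, (1 - (edgeProb s δ (insert a A) i : ℝ)) := by
        refine prod_le_prod (fun i _ => ?_) fun i _ => ?_
        · have := hnonneg A i
          positivity
        split_ifs with hia
        · rw [hia, hmem]
          exact mul_le_of_le_one_left (by positivity) (sub_le_self 1 (edgeProb s δ A a).2.1)
        · rw [mul_one, edgeProb_congr (Set.mem_insert_iff.trans (or_iff_right hia))]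

end EdgeProb

section AdmissibleSequence

/-- `a` may follow the finite set `S` of lengths as the `k`-th sparse length: the presence of the
star `HasPendantStar (m + 1)` is likely on `a` vertices before `a` is added to `S`, unlikely on
`2 * a` vertices afterwards, and `a` is large compared with everything chosen before. -/
structure IsAdmissible (m : ℕ) (δ : ℝ) (k : ℕ) (S : Finset ℕ) (a : ℕ) : Prop where
  lt : m + 1 < a
  two_mul_lt : ∀ b ∈ S, 2 * b < a
  le_prob : 1 - 1 / ((k : ℝ) + 1) ≤
    (graphMeasure (edgeProb (m + 1) δ S) a).real {ω | HasPendantStar (m + 1) ω}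
  prob_le : (graphMeasure (edgeProb (m + 1) δ (insert a S)) (2 * a)).real
    {ω | HasPendantStar (m + 1) ω} ≤ 1 / ((k : ℝ) + 1)
  le_prod : ∀ n, (a : ℝ) ^ (-δ) ≤ ∏ i ∈ Icc 1 n, (1 - (edgeProb (m + 1) δ S i : ℝ))

variable {m k i n : ℕ} {δ : ℝ} {a : ℕ → ℕ}

lemma eventually_isAdmissible (hδ : 0 < δ) (hm : 1 < δ * m) (k : ℕ) (S : Finset ℕ) :
    ∀ᶠ a in atTop, IsAdmissible m δ k S a := by
  have hk : 0 < 1 / ((k : ℝ) + 1) := by positivity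
  filter_upwards [eventually_gt_atTop (m + 1),
    (eventually_all_finset S).2 fun b _ => eventually_gt_atTop (2 * b),
    (tendsto_graphMeasure_real_edgeProb_finset hδ.le (m + 1) S).eventually_const_le
      (sub_lt_self 1 hk),
    (tendsto_graphMeasure_real_edgeProb_insert hδ.le hm S).eventually_le_const hk,
    eventually_rpow_neg_le_prod_one_sub_edgeProb hδ (m + 1) S]
    with a hma hSa hhigh hlow hprod
  exact ⟨hma, hSa, hhigh, hlow, hprod⟩

lemma mem_range_iff_mem_image_range_of_lt (ha : StrictMono a) (hi : i < a k) :
    i ∈ Set.range a ↔ i ∈ (range k).image a := by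
  simp only [Set.mem_range, mem_image, mem_range]
  refine ⟨?_, fun ⟨j, _, hj⟩ => ⟨j, hj⟩⟩
  rintro ⟨j, rfl⟩
  exact ⟨j, ha.lt_iff_lt.1 hi, rfl⟩

lemma edgeProb_range_of_lt (s : ℕ) (δ : ℝ) (ha : StrictMono a) (hi : i < a k) :
    edgeProb s δ (Set.range a) i = edgeProb s δ ((range k).image a) i :=
  edgeProb_congr (mem_range_iff_mem_image_range_of_lt ha hi)

lemma edgeProb_range_of_lt_succ (s : ℕ) (δ : ℝ) (ha : StrictMono a) (hi : i < a (k + 1)) :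
    edgeProb s δ (Set.range a) i =
      edgeProb s δ (insert (a k) ((range k).image a : Finset ℕ)) i := by
  rw [edgeProb_range_of_lt s δ ha hi, range_add_one, image_insert, coe_insert]

variable (ha : StrictMono a) (hadm : ∀ k, IsAdmissible m δ k ((range k).image a) (a k))
include ha hadm

lemma tendsto_graphMeasure_real_edgeProb_range :
    Tendsto (fun k => (graphMeasure (edgeProb (m + 1) δ (Set.range a)) (a k)).real
      {ω | HasPendantStar (m + 1) ω}) atTop (𝓝 1) := by
  have hlim : Tendsto (fun k : ℕ => 1 - 1 / ((k : ℝ) + 1)) atTop (𝓝 1) := by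
    simpa only [sub_zero] using tendsto_one_div_add_atTop_nhds_zero_nat.const_sub (1 : ℝ)
  refine tendsto_of_tendsto_of_tendsto_of_le_of_le hlim tendsto_const_nhds (fun k => ?_)
    fun k => measureReal_le_one
  rw [graphMeasure_congr fun i hi => edgeProb_range_of_lt (m + 1) δ ha hi]
  exact (hadm k).le_prob

lemma tendsto_graphMeasure_real_edgeProb_range_two_mul :
    Tendsto (fun k => (graphMeasure (edgeProb (m + 1) δ (Set.range a)) (2 * a k)).real
      {ω | HasPendantStar (m + 1) ω}) atTop (𝓝 0) := by
  refine squeeze_zero (fun _ => measureReal_nonneg) (fun k => ?_)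
    (tendsto_one_div_add_atTop_nhds_zero_nat (𝕜 := ℝ))
  have hnext : 2 * a k < a (k + 1) :=
    (hadm (k + 1)).two_mul_lt (a k) (mem_image_of_mem a (self_mem_range_succ k))
  rw [graphMeasure_congr fun i hi => edgeProb_range_of_lt_succ (m + 1) δ ha (hi.trans hnext)]
  exact (hadm k).prob_le

lemma rpow_neg_two_mul_le_prod_one_sub_edgeProb_range (hδ : 0 ≤ δ) (hn : a 0 ≤ n) :
    (n : ℝ) ^ (-(2 * δ)) ≤ ∏ i ∈ Icc 1 n, (1 - (edgeProb (m + 1) δ (Set.range a) i : ℝ)) := by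
  obtain ⟨k, hkn, hnk⟩ : ∃ k, a k < n + 1 ∧ n + 1 ≤ a (k + 1) :=
    ha.exists_between_of_tendsto_atTop ha.tendsto_atTop (Nat.lt_succ_of_le hn)
  have hak : (0 : ℝ) < a k := by exact_mod_cast (Nat.zero_le _).trans_lt (hadm k).lt
  calc (n : ℝ) ^ (-(2 * δ))
      ≤ (a k : ℝ) ^ (-(2 * δ)) := Real.rpow_le_rpow_of_nonpos hak
        (by exact_mod_cast Nat.le_of_lt_succ hkn) (by linarith)
    _ = (a k : ℝ) ^ (-δ) * (a k : ℝ) ^ (-δ) := by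
        rw [← Real.rpow_add hak]
        ring_nf
    _ ≤ (∏ i ∈ Icc 1 n, (1 - (edgeProb (m + 1) δ ((range k).image a) i : ℝ))) *
          (a k : ℝ) ^ (-δ) :=
        mul_le_mul_of_nonneg_right ((hadm k).le_prod n) (by positivity)
    _ ≤ ∏ i ∈ Icc 1 n,
          (1 - (edgeProb (m + 1) δ (insert (a k) ((range k).image a : Finset ℕ)) i : ℝ)) :=
        prod_mul_rpow_le_prod_one_sub_edgeProb_insert hδ (hadm k).lt n
    _ = ∏ i ∈ Icc 1 n, (1 - (edgeProb (m + 1) δ (Set.range a) i : ℝ)) :=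
        prod_congr rfl fun i hi => by
          rw [edgeProb_range_of_lt_succ (m + 1) δ ha ((mem_Icc.1 hi).2.trans_lt hnk)]

end AdmissibleSequence

lemma neg_log_div_log_le_of_rpow_neg_le {x y c : ℝ} (hx : 1 < x) (h : x ^ (-c) ≤ y) :
    -Real.log y / Real.log x ≤ c := by
  have hlog := Real.log_le_log (by positivity) h
  rw [Real.log_rpow (by positivity)] at hlog
  rw [div_le_iff₀ (Real.log_pos hx)]
  linarith

/-- For every `ε > 0` there are a sequence `p̄` with `0 ≤ p i < 1` and a
first-order sentence `ψ` of the language `L` such that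
`-log (∏_{i=1}^n (1 - p i)) / log n < ε` for all sufficiently large `n`, yet
`liminf Prob(n, p̄; ψ) = 0` while `limsup Prob(n, p̄; ψ) = 1`. -/
theorem statement_1 (ε : ℝ) (hε : 0 < ε) :
    ∃ (p : ℕ → ℝ) (ψ : Language.graph.Sentence),
      (∀ i, 0 ≤ p i ∧ p i < 1) ∧
      (∀ᶠ n : ℕ in atTop,
        -Real.log (∏ i ∈ Finset.Icc 1 n, (1 - p i)) / Real.log n < ε) ∧
      liminf (fun n => ProbL p n ψ) atTop = 0 ∧
      limsup (fun n => ProbL p n ψ) atTop = 1 := by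
  obtain ⟨δ, hδ, hδε⟩ : ∃ δ : ℝ, 0 < δ ∧ 2 * δ < ε := ⟨ε / 3, by linarith, by linarith⟩
  obtain ⟨m, hm⟩ : ∃ m : ℕ, 1 < m • δ := exists_lt_nsmul hδ 1
  rw [nsmul_eq_mul, mul_comm] at hm
  obtain ⟨a, ha, hadm⟩ := exists_strictMono_forall_image_range (eventually_isAdmissible hδ hm)
  let p := edgeProb (m + 1) δ (Set.range a)
  refine ⟨fun i => p i, pendantStarSentence (m + 1),
    fun i => ⟨(p i).2.1, sub_pos.1 (one_sub_edgeProb_pos hδ.le _ i)⟩, ?_, ?_, ?_⟩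
  · filter_upwards [eventually_ge_atTop (a 0), eventually_gt_atTop 1] with n hn hn1
    refine (neg_log_div_log_le_of_rpow_neg_le (by exact_mod_cast hn1) ?_).trans_lt hδε
    exact rpow_neg_two_mul_le_prod_one_sub_edgeProb_range ha hadm hδ.le hn
  all_goals simp only [probL_pendantStarSentence]
  · exact liminf_eq_of_tendsto_comp (fun _ => measureReal_nonneg) (fun _ => measureReal_le_one)
      (ha.tendsto_atTop.const_mul_atTop' two_pos)
      (tendsto_graphMeasure_real_edgeProb_range_two_mul ha hadm)
  · exact limsup_eq_of_tendsto_comp (fun _ => measureReal_nonneg) (fun _ => measureReal_le_one)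
      ha.tendsto_atTop (tendsto_graphMeasure_real_edgeProb_range ha hadm)

end RandomGraph
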